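/- The number of involutions in Ree(q) equals q^2 (q^2 − q + 1). -/

import Mathlib

open Matrix

set_option linter.unusedSectionVars false

noncomputable section

namespace ReePaper

variable {F : Type*} [Field F] [Fintype F]

/-- The matrix `α(x)`. -/
def amat (t : ℕ) (x : F) : Matrix (Fin 7) (Fin 7) F :=
  !![1, x^t, 0, 0, -x^(3*t+1), -x^(3*t+2), x^(4*t+2);
     0, 1, x, x^(t+1), -x^(2*t+1), 0, -x^(3*t+2);
     0, 0, 1, x^t, -x^(2*t), 0, x^(3*t+1);
     0, 0, 0, 1, x^t, 0, 0;
     0, 0, 0, 0, 1, -x, x^(t+1);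
     0, 0, 0, 0, 0, 1, -x^t;
     0, 0, 0, 0, 0, 0, 1]

/-- The matrix `β(x)`. -/
def bmat (t : ℕ) (x : F) : Matrix (Fin 7) (Fin 7) F :=
  !![1, 0, -x^t, 0, -x, 0, -x^(t+1);
     0, 1, 0, x^t, 0, -x^(2*t), 0;
     0, 0, 1, 0, 0, 0, x;
     0, 0, 0, 1, 0, x^t, 0;
     0, 0, 0, 0, 1, 0, x^t;
     0, 0, 0, 0, 0, 1, 0;
     0, 0, 0, 0, 0, 0, 1]

/-- The matrix `γ(x)`. -/
def cmat (t : ℕ) (x : F) : Matrix (Fin 7) (Fin 7) F :=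
  !![1, 0, 0, -x^t, 0, -x, -x^(2*t);
     0, 1, 0, 0, -x^t, 0, x;
     0, 0, 1, 0, 0, x^t, 0;
     0, 0, 0, 1, 0, 0, -x^t;
     0, 0, 0, 0, 1, 0, 0;
     0, 0, 0, 0, 0, 1, 0;
     0, 0, 0, 0, 0, 0, 1]

/-- The diagonal matrix `h(λ)`. -/
def hmat (t : ℕ) (l : Fˣ) : Matrix (Fin 7) (Fin 7) F :=
  Matrix.diagonal ![((l ^ (t : ℤ) : Fˣ) : F), ((l ^ (1 - (t : ℤ)) : Fˣ) : F),
    ((l ^ (2 * (t : ℤ) - 1) : Fˣ) : F), 1, ((l ^ (1 - 2 * (t : ℤ)) : Fˣ) : F),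
    ((l ^ ((t : ℤ) - 1) : Fˣ) : F), ((l ^ (-(t : ℤ)) : Fˣ) : F)]

/-- The matrix `Υ`, the antidiagonal matrix with all entries `-1`. -/
def ups : Matrix (Fin 7) (Fin 7) F :=
  !![0, 0, 0, 0, 0, 0, -1;
     0, 0, 0, 0, 0, -1, 0;
     0, 0, 0, 0, -1, 0, 0;
     0, 0, 0, -1, 0, 0, 0;
     0, 0, -1, 0, 0, 0, 0;
     0, -1, 0, 0, 0, 0, 0;
     -1, 0, 0, 0, 0, 0, 0]

/-- `S(a, b, c) = α(a) β(b) γ(c)`. -/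
def Smat (t : ℕ) (a b c : F) : Matrix (Fin 7) (Fin 7) F :=
  amat t a * bmat t b * cmat t c

/-- The Ree group `Ree(q) = ⟨α(x), β(x), γ(x), h(λ), Υ⟩ ≤ GL(7, q)`. -/
def ReeGroup (t : ℕ) : Subgroup (GL (Fin 7) F) :=
  Subgroup.closure {g : GL (Fin 7) F |
    (∃ x : F, (g : Matrix (Fin 7) (Fin 7) F) = amat t x) ∨
    (∃ x : F, (g : Matrix (Fin 7) (Fin 7) F) = bmat t x) ∨
    (∃ x : F, (g : Matrix (Fin 7) (Fin 7) F) = cmat t x) ∨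
    (∃ l : Fˣ, (g : Matrix (Fin 7) (Fin 7) F) = hmat t l) ∨
    (g : Matrix (Fin 7) (Fin 7) F) = ups}

/-- The subgroup `U(q) = ⟨α(x), β(x), γ(x)⟩`. -/
def Usub (t : ℕ) : Subgroup (GL (Fin 7) F) :=
  Subgroup.closure {g : GL (Fin 7) F |
    (∃ x : F, (g : Matrix (Fin 7) (Fin 7) F) = amat t x) ∨
    (∃ x : F, (g : Matrix (Fin 7) (Fin 7) F) = bmat t x) ∨
    (∃ x : F, (g : Matrix (Fin 7) (Fin 7) F) = cmat t x)}

/-- The subgroup `H(q) = {h(λ) : λ ∈ F_q^×}`. -/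
def Hsub (t : ℕ) : Subgroup (GL (Fin 7) F) :=
  Subgroup.closure {g : GL (Fin 7) F |
    ∃ l : Fˣ, (g : Matrix (Fin 7) (Fin 7) F) = hmat t l}

end ReePaper

namespace ReePaper

variable {F : Type*} [Field F] [Fintype F]

/-- Field data: the Tits-like endomorphism `th` (`x ↦ x^t`) and `sg` (`x ↦ x^(3t)`). -/
structure RD (F : Type*) [Field F] (t : ℕ) where
  three : (3 : F) = 0
  th : F →+* F
  sg : F →+* F
  th_eq : ∀ x, x ^ t = th x
  sg_eq : ∀ x, sg x = (th x) ^ 3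
  sg_th : ∀ x, sg (th x) = x

/-- The symmetric bilinear form. -/
def BB (x y : Fin 7 → F) : F :=
  x 0 * y 6 + x 1 * y 5 + x 2 * y 4 - x 3 * y 3 + x 4 * y 2 + x 5 * y 1 + x 6 * y 0

/-- A `3 × 3` minor. -/
def dd (x y z : Fin 7 → F) (i j k : Fin 7) : F :=
  x i * (y j * z k - y k * z j) - x j * (y i * z k - y k * z i) + x k * (y i * z j - y j * z i)

/-- The alternating trilinear form. -/
def TT (x y z : Fin 7 → F) : F :=
  dd x y z 0 4 5 + dd x y z 1 2 6 + dd x y z 0 3 6 - dd x y z 1 3 5 - dd x y z 2 3 4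

theorem amat_mulVec {t : ℕ} (D : RD F t) (s : F) (x : Fin 7 → F) :
    amat t s *ᵥ x = ![x 0 + D.th s * x 1 - D.th s ^ 3 * s * x 4 - D.th s ^ 3 * s ^ 2 * x 5
        + D.th s ^ 4 * s ^ 2 * x 6,
      x 1 + s * x 2 + D.th s * s * x 3 - D.th s ^ 2 * s * x 4 - D.th s ^ 3 * s ^ 2 * x 6,
      x 2 + D.th s * x 3 - D.th s ^ 2 * x 4 + D.th s ^ 3 * s * x 6,
      x 3 + D.th s * x 4,
      x 4 - s * x 5 + D.th s * s * x 6,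
      x 5 - D.th s * x 6,
      x 6] := by
  have h2 : s ^ (2 * t) = D.th s ^ 2 := by rw [← D.th_eq, ← pow_mul, mul_comm]
  have h3 : s ^ (3 * t) = D.th s ^ 3 := by rw [← D.th_eq, ← pow_mul, mul_comm]
  have h4 : s ^ (4 * t) = D.th s ^ 4 := by rw [← D.th_eq, ← pow_mul, mul_comm]
  ext i
  fin_cases i <;>
    simp [amat, Matrix.mulVec, dotProduct, Fin.sum_univ_succ, pow_add, h2, h3, h4, D.th_eq] <;> ring

theorem bmat_mulVec {t : ℕ} (D : RD F t) (s : F) (x : Fin 7 → F) :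
    bmat t s *ᵥ x = ![x 0 - D.th s * x 2 - s * x 4 - D.th s * s * x 6,
      x 1 + D.th s * x 3 - D.th s ^ 2 * x 5,
      x 2 + s * x 6,
      x 3 + D.th s * x 5,
      x 4 + D.th s * x 6,
      x 5,
      x 6] := by
  have h2 : s ^ (2 * t) = D.th s ^ 2 := by rw [← D.th_eq, ← pow_mul, mul_comm]
  ext i
  fin_cases i <;>
    simp [bmat, Matrix.mulVec, dotProduct, Fin.sum_univ_succ, pow_add, h2, D.th_eq] <;> ring

theorem cmat_mulVec {t : ℕ} (D : RD F t) (s : F) (x : Fin 7 → F) :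
    cmat t s *ᵥ x = ![x 0 - D.th s * x 3 - s * x 5 - D.th s ^ 2 * x 6,
      x 1 - D.th s * x 4 + s * x 6,
      x 2 + D.th s * x 5,
      x 3 - D.th s * x 6,
      x 4,
      x 5,
      x 6] := by
  have h2 : s ^ (2 * t) = D.th s ^ 2 := by rw [← D.th_eq, ← pow_mul, mul_comm]
  ext i
  fin_cases i <;>
    simp [cmat, Matrix.mulVec, dotProduct, Fin.sum_univ_succ, pow_add, h2, D.th_eq] <;> ring

theorem ups_mulVec (x : Fin 7 → F) :
    ups *ᵥ x = ![-x 6, -x 5, -x 4, -x 3, -x 2, -x 1, -x 0] := by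
  ext i
  fin_cases i <;> simp [ups, Matrix.mulVec, dotProduct, Fin.sum_univ_succ]

/-- The points of the ovoid. -/
def vv {t : ℕ} (D : RD F t) (a b c : F) : Fin 7 → F :=
  ![D.th a ^ 4 * a ^ 2 - D.th a ^ 3 * a * D.th b - D.th a * D.th b * D.th c + D.th a * c
      - D.th b * b - D.th c ^ 2,
    - D.th a ^ 3 * a ^ 2 - D.th a ^ 2 * a * D.th b - D.th a * a * D.th c + a * b
      - D.th b * D.th c + c,
    D.th a ^ 3 * a - D.th a ^ 2 * D.th b - D.th a * D.th c + b,
    D.th a * D.th b - D.th c,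
    D.th a * a + D.th b,
    - D.th a,
    1]

theorem RD.th_sg {t : ℕ} (D : RD F t) (x : F) : D.th (D.sg x) = x := by
  rw [D.sg_eq, map_pow, ← D.sg_eq, D.sg_th]


theorem amat_vv {t : ℕ} (D : RD F t) (s a b c : F) :
    amat t s *ᵥ vv D a b c = vv D (a + s) (b - s * D.sg a)
      (c + a * s * D.sg a - s ^ 2 * D.sg a) := by
  have h3 := D.three
  rw [amat_mulVec D]
  ext i
  fin_cases i <;> simp [vv, D.th_sg] <;> (try rw [D.sg_eq]) <;> (try grind)

theorem bmat_vv {t : ℕ} (D : RD F t) (s a b c : F) :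
    bmat t s *ᵥ vv D a b c = vv D a (b + s) (c - a * s) := by
  have h3 := D.three
  rw [bmat_mulVec D]
  ext i
  fin_cases i <;> simp [vv, D.th_sg] <;> (try rw [D.sg_eq]) <;> (try grind)

theorem cmat_vv {t : ℕ} (D : RD F t) (s a b c : F) :
    cmat t s *ᵥ vv D a b c = vv D a b (c + s) := by
  have h3 := D.three
  rw [cmat_mulVec D]
  ext i
  fin_cases i <;> simp [vv] <;> grind


theorem amat_BB {t : ℕ} (D : RD F t) (s : F) (x y : Fin 7 → F) :
    BB (amat t s *ᵥ x) (amat t s *ᵥ y) = BB x y := by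
  have h3 := D.three
  rw [amat_mulVec D, amat_mulVec D]
  simp [BB]
  grind

theorem bmat_BB {t : ℕ} (D : RD F t) (s : F) (x y : Fin 7 → F) :
    BB (bmat t s *ᵥ x) (bmat t s *ᵥ y) = BB x y := by
  have h3 := D.three
  rw [bmat_mulVec D, bmat_mulVec D]
  simp [BB]
  grind

theorem cmat_BB {t : ℕ} (D : RD F t) (s : F) (x y : Fin 7 → F) :
    BB (cmat t s *ᵥ x) (cmat t s *ᵥ y) = BB x y := by
  have h3 := D.three
  rw [cmat_mulVec D, cmat_mulVec D]
  simp [BB]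
  grind

theorem ups_BB (x y : Fin 7 → F) :
    BB (ups *ᵥ x) (ups *ᵥ y) = BB x y := by
  rw [ups_mulVec, ups_mulVec]
  simp [BB]
  ring

theorem bmat_TT {t : ℕ} (D : RD F t) (s : F) (x y z : Fin 7 → F) :
    TT (bmat t s *ᵥ x) (bmat t s *ᵥ y) (bmat t s *ᵥ z) = TT x y z := by
  have h3 := D.three
  rw [bmat_mulVec D, bmat_mulVec D, bmat_mulVec D]
  simp [TT, dd]
  generalize D.th s = u
  grind

theorem cmat_TT {t : ℕ} (D : RD F t) (s : F) (x y z : Fin 7 → F) :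
    TT (cmat t s *ᵥ x) (cmat t s *ᵥ y) (cmat t s *ᵥ z) = TT x y z := by
  have h3 := D.three
  rw [cmat_mulVec D, cmat_mulVec D, cmat_mulVec D]
  simp [TT, dd]
  generalize D.th s = u
  grind

theorem ups_TT (x y z : Fin 7 → F) :
    TT (ups *ᵥ x) (ups *ᵥ y) (ups *ᵥ z) = TT x y z := by
  rw [ups_mulVec, ups_mulVec, ups_mulVec]
  simp [TT, dd]
  ring

set_option maxHeartbeats 4000000 in
theorem amat_TT {t : ℕ} (D : RD F t) (s : F) (x y z : Fin 7 → F) :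
    TT (amat t s *ᵥ x) (amat t s *ᵥ y) (amat t s *ᵥ z) = TT x y z := by
  have h3 := D.three
  rw [amat_mulVec D, amat_mulVec D, amat_mulVec D]
  simp [TT, dd]
  generalize D.th s = u
  grind

/-- The equations of the ovoid in terms of `x`, its twist `X`, and auxiliary Plücker
coordinates of the distinguished line through `x`. -/
structure OmEq (x X : Fin 7 → F) (p14 p15 p16 p17 p27 p37 p47 : F) : Prop where
  q : x 0 * x 6 + x 1 * x 5 + x 2 * x 4 + x 3 ^ 2 = 0
  e567 : x 4 * (-X 6) - x 5 * (-X 5) + x 6 * (-p47) = 0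
  e467 : x 3 * (-X 6) - x 5 * p47 + x 6 * p37 = 0
  e367 : x 2 * (-X 6) - x 5 * p37 + x 6 * X 4 = 0
  e457 : x 3 * (-X 5) - x 4 * p47 + x 6 * (-p27) = 0
  e267 : x 1 * (-X 6) - x 5 * p27 + x 6 * (X 3 - p17) = 0
  e357 : x 2 * (-X 5) - x 4 * p37 + x 6 * (-X 3 - p17) = 0
  e356 : x 2 * (-p47) - x 4 * X 4 + x 5 * (-X 3 - p17) = 0
  e236 : x 1 * X 4 - x 2 * (X 3 - p17) + x 5 * (-p14) = 0
  e123 : x 0 * (-p14) - x 1 * (-X 1) + x 2 * (-X 0) = 0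
  e124 : x 0 * p15 - x 1 * p14 + x 3 * (-X 0) = 0
  e125 : x 0 * X 2 - x 1 * p15 + x 4 * (-X 0) = 0
  e134 : x 0 * (-p16) - x 2 * p14 + x 3 * (-X 1) = 0
  e126 : x 0 * (X 3 - p17) - x 1 * p16 + x 5 * (-X 0) = 0
  e135 : x 0 * (-X 3 - p17) - x 2 * p15 + x 4 * (-X 1) = 0
  e235 : x 1 * (-X 3 - p17) - x 2 * X 2 + x 4 * (-p14) = 0
  e256 : x 1 * (-p47) - x 4 * (X 3 - p17) + x 5 * X 2 = 0

/-- The (cone over the) ovoid. -/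
def Om {t : ℕ} (D : RD F t) (x : Fin 7 → F) : Prop :=
  ∃ p14 p15 p16 p17 p27 p37 p47, OmEq x (fun i => D.sg (x i)) p14 p15 p16 p17 p27 p37 p47

theorem Om_ups {t : ℕ} (D : RD F t) (x : Fin 7 → F) (h : Om D x) : Om D (ups *ᵥ x) := by
  obtain ⟨p14, p15, p16, p17, p27, p37, p47, h⟩ := h
  refine ⟨-p47, -p37, -p27, -p17, -p16, -p15, -p14, ?_⟩
  rw [ups_mulVec]
  obtain ⟨q, e567, e467, e367, e457, e267, e357, e356, e236,
    e123, e124, e125, e134, e126, e135, e235, e256⟩ := h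
  constructor <;> simp only [Matrix.cons_val, map_neg]
  · linear_combination q
  · linear_combination e123
  · linear_combination e124
  · linear_combination e125
  · linear_combination e134
  · linear_combination e126
  · linear_combination e135
  · linear_combination e235
  · linear_combination e256
  · linear_combination e567
  · linear_combination e467
  · linear_combination e367
  · linear_combination e457
  · linear_combination e267
  · linear_combination e357
  · linear_combination e356
  · linear_combination e236

theorem Om_smul {t : ℕ} (D : RD F t) (k : F) (x : Fin 7 → F) (h : Om D x) : Om D (k • x) := by
  obtain ⟨p14, p15, p16, p17, p27, p37, p47, h⟩ := h
  refine ⟨D.sg k * p14, D.sg k * p15, D.sg k * p16, D.sg k * p17, D.sg k * p27, D.sg k * p37,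
    D.sg k * p47, ?_⟩
  obtain ⟨q, e567, e467, e367, e457, e267, e357, e356, e236,
    e123, e124, e125, e134, e126, e135, e235, e256⟩ := h
  constructor <;> simp only [Pi.smul_apply, smul_eq_mul, map_mul]
  · linear_combination k ^ 2 * q
  · linear_combination k * D.sg k * e567
  · linear_combination k * D.sg k * e467
  · linear_combination k * D.sg k * e367
  · linear_combination k * D.sg k * e457
  · linear_combination k * D.sg k * e267
  · linear_combination k * D.sg k * e357
  · linear_combination k * D.sg k * e356
  · linear_combination k * D.sg k * e236
  · linear_combination k * D.sg k * e123
  · linear_combination k * D.sg k * e124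
  · linear_combination k * D.sg k * e125
  · linear_combination k * D.sg k * e134
  · linear_combination k * D.sg k * e126
  · linear_combination k * D.sg k * e135
  · linear_combination k * D.sg k * e235
  · linear_combination k * D.sg k * e256

theorem Om_vv {t : ℕ} (D : RD F t) (a b c : F) : Om D (vv D a b c) := by
  have h3 := D.three
  have e1 := D.sg_eq a
  have e2 := D.sg_eq b
  have e3 := D.sg_eq c
  let u := D.th a
  let v := D.th b
  let w := D.th c
  refine ⟨-u^4*a^2*v-u^3*a^2*w-u^3*a*v^2+u^2*v^3-u*v^2*w-u*v*c-v^2*b+v*w^2-w*c,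
    -u^3*a^2*v+u^2*a*v^2-u*a*v*w+u*v^3+a*v*b+a*w^2+v^2*w+v*c,
    -u^3*a*v-u^2*v^2+u*v*w-v*b-w^2,
    u^3*a^2+u*v^2+v*w+c, -u*a*v-a*w+v^2, -u*v-w, -v, ?_⟩
  constructor <;> simp only [vv, Matrix.cons_val, map_add, map_sub, map_mul, map_pow, map_neg,
    map_one, D.sg_th, e1, e2, e3] <;>
    (try simp only [u, v, w]) <;> generalize D.th a = u <;> generalize D.th b = v <;>
    generalize D.th c = w <;> clear e1 e2 e3 <;> grind

/-- The point at infinity. -/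
def ee : Fin 7 → F := ![1, 0, 0, 0, 0, 0, 0]

theorem Om_ee {t : ℕ} (D : RD F t) : Om D ee := by
  refine ⟨0, 0, 0, 0, 0, 0, 0, ?_⟩
  constructor <;> simp [ee]

theorem Om_zero {t : ℕ} (D : RD F t) (x : Fin 7 → F) (h : Om D x) (h6 : x 6 = 0) :
    x = x 0 • ee := by
  obtain ⟨p14, p15, p16, p17, p27, p37, p47, h⟩ := h
  obtain ⟨q, e567, e467, e367, e457, e267, e357, e356, e236,
    e123, e124, e125, e134, e126, e135, e235, e256⟩ := h
  have sg0 : ∀ y, D.sg y = 0 → y = 0 := fun y hy => (map_eq_zero D.sg).1 hy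
  have h5 : x 5 = 0 := by
    simp only [h6, map_zero] at e567
    have : x 5 * D.sg (x 5) = 0 := by linear_combination e567
    rcases mul_eq_zero.1 this with h | h
    · exact h
    · exact sg0 _ h
  simp only [h6, h5, map_zero] at q e457 e356 e236 e235 e125 e124 e123
  have h4 : x 4 = 0 := by
    by_contra hn
    have h1 : p47 = 0 := by
      have : x 4 * p47 = 0 := by linear_combination -e457
      exact (mul_eq_zero.1 this).resolve_left hn
    have : x 4 * D.sg (x 4) = 0 := by rw [h1] at e356; linear_combination -e356
    exact hn (sg0 _ ((mul_eq_zero.1 this).resolve_left hn))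
  simp only [h4, map_zero] at q e457 e356 e236 e235 e125 e124 e123
  have h3' : x 3 = 0 := by
    have : x 3 ^ 2 = 0 := by linear_combination q
    exact pow_eq_zero_iff (two_ne_zero) |>.1 this
  simp only [h3', map_zero] at q e457 e356 e236 e235 e125 e124 e123
  have h2 : x 2 = 0 := by
    by_contra hn
    have h1 : p17 = 0 := by
      have : x 2 * p17 = 0 := by linear_combination e236
      exact (mul_eq_zero.1 this).resolve_left hn
    have : x 2 * D.sg (x 2) = 0 := by rw [h1] at e235; linear_combination -e235
    exact hn (sg0 _ ((mul_eq_zero.1 this).resolve_left hn))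
  simp only [h2, map_zero] at q e457 e356 e236 e235 e125 e124 e123
  have h1 : x 1 = 0 := by
    by_contra hn
    have a1 : p15 = 0 := by
      have : x 1 * p15 = 0 := by linear_combination -e125
      exact (mul_eq_zero.1 this).resolve_left hn
    have a2 : p14 = 0 := by
      have : x 1 * p14 = 0 := by rw [a1] at e124; linear_combination -e124
      exact (mul_eq_zero.1 this).resolve_left hn
    have : x 1 * D.sg (x 1) = 0 := by rw [a2] at e123; linear_combination e123
    exact hn (sg0 _ ((mul_eq_zero.1 this).resolve_left hn))
  ext i
  fin_cases i <;> simp [ee, h1, h2, h3', h4, h5, h6]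

theorem Om_one {t : ℕ} (D : RD F t) (x : Fin 7 → F) (h : Om D x) (h6 : x 6 = 1) :
    ∃ a b c, x = vv D a b c := by
  have h3 := D.three
  obtain ⟨p14, p15, p16, p17, p27, p37, p47, h⟩ := h
  obtain ⟨q, e567, e467, e367, e457, e267, e357, -, -,
    -, -, -, -, -, -, -, -⟩ := h
  obtain ⟨a, ha⟩ : ∃ a, D.th a = -x 5 := ⟨D.sg (-x 5), D.th_sg _⟩
  obtain ⟨b, hb⟩ : ∃ b, D.th b = x 4 - D.th a * a := ⟨D.sg _, D.th_sg _⟩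
  obtain ⟨c, hc⟩ : ∃ c, D.th c = D.th a * D.th b - x 3 := ⟨D.sg _, D.th_sg _⟩
  have x5 : x 5 = - D.th a := by linear_combination ha
  have x4 : x 4 = D.th a * a + D.th b := by linear_combination -hb
  have x3 : x 3 = D.th a * D.th b - D.th c := by linear_combination hc
  have sa := D.sg_eq a
  have sb := D.sg_eq b
  have sc := D.sg_eq c
  simp only [h6, x5, x4, x3, map_one, map_neg, map_add, map_sub, map_mul, D.sg_th, sa] at q e567 e467 e367 e457 e267 e357
  clear ha hb hc sa sb sc
  refine ⟨a, b, c, ?_⟩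
  have r47 : p47 = - D.th b := by linear_combination -e567
  subst r47
  have r37 : p37 = - D.th a * D.th b - D.th c := by grind
  subst r37
  have r27 : p27 = - D.th a * a * D.th b - a * D.th c + D.th b ^ 2 := by grind
  subst r27
  have r2 : x 2 = D.th a ^ 3 * a - D.th a ^ 2 * D.th b - D.th a * D.th c + b := by grind
  rw [r2] at e357 q
  have r17 : p17 = D.th a ^ 3 * a ^ 2 + D.th a * D.th b ^ 2 + D.th b * D.th c + c := by grind
  subst r17
  have r1 : x 1 = - D.th a ^ 3 * a ^ 2 - D.th a ^ 2 * a * D.th b - D.th a * a * D.th c + a * b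
      - D.th b * D.th c + c := by grind
  rw [r1] at q
  have r0 : x 0 = D.th a ^ 4 * a ^ 2 - D.th a ^ 3 * a * D.th b - D.th a * D.th b * D.th c
      + D.th a * c - D.th b * b - D.th c ^ 2 := by grind
  ext i
  fin_cases i <;> simp [vv, *]


theorem hmat_mulVec {t : ℕ} (D : RD F t) (l : Fˣ) (x : Fin 7 → F) :
    hmat t l *ᵥ x = ![D.th l * x 0, l * (D.th l)⁻¹ * x 1, D.th l ^ 2 * (l : F)⁻¹ * x 2, x 3,
      l * (D.th l)⁻¹ ^ 2 * x 4, D.th l * (l : F)⁻¹ * x 5, (D.th l)⁻¹ * x 6] := by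
  have hl : (l : F) ≠ 0 := l.ne_zero
  have hL : D.th l ≠ 0 := (map_ne_zero D.th).2 hl
  have e : ((l ^ t : Fˣ) : F) = D.th l := by rw [Units.val_pow_eq_pow_val, D.th_eq]
  have e2 : (l : F) ^ (2 * (t : ℤ)) = ((l : F) ^ t) ^ 2 := by
    rw [mul_comm, _root_.zpow_mul, zpow_natCast]; norm_cast
  ext i
  rw [hmat, Matrix.mulVec_diagonal]
  fin_cases i
  · simp [← e]
  · simp [← e, zpow_sub₀ hl, div_eq_mul_inv]
  · simp [← e, zpow_sub₀ hl, div_eq_mul_inv, e2]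
  · simp
  · simp [← e, zpow_sub₀ hl, div_eq_mul_inv, e2]
  · simp [← e, zpow_sub₀ hl, div_eq_mul_inv]
  · simp [← e]

theorem hmat_BB {t : ℕ} (D : RD F t) (l : Fˣ) (x y : Fin 7 → F) :
    BB (hmat t l *ᵥ x) (hmat t l *ᵥ y) = BB x y := by
  have hl : (l : F) ≠ 0 := l.ne_zero
  have hL : D.th l ≠ 0 := (map_ne_zero D.th).2 hl
  rw [hmat_mulVec D, hmat_mulVec D]
  simp only [BB, Matrix.cons_val]
  field_simp

theorem hmat_TT {t : ℕ} (D : RD F t) (l : Fˣ) (x y z : Fin 7 → F) :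
    TT (hmat t l *ᵥ x) (hmat t l *ᵥ y) (hmat t l *ᵥ z) = TT x y z := by
  have hl : (l : F) ≠ 0 := l.ne_zero
  have hL : D.th l ≠ 0 := (map_ne_zero D.th).2 hl
  rw [hmat_mulVec D, hmat_mulVec D, hmat_mulVec D]
  simp only [TT, dd, Matrix.cons_val]
  field_simp

theorem Om_hmat {t : ℕ} (D : RD F t) (l : Fˣ) (x : Fin 7 → F) (h : Om D x) :
    Om D (hmat t l *ᵥ x) := by
  have hl : (l : F) ≠ 0 := l.ne_zero
  have hL : D.th l ≠ 0 := (map_ne_zero D.th).2 hl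
  obtain ⟨p14, p15, p16, p17, p27, p37, p47, h⟩ := h
  rw [hmat_mulVec D]
  have e := D.sg_eq l
  set L := D.th l with hLd
  have e' : D.sg L = l := D.sg_th _
  obtain ⟨k, hk⟩ : ∃ k : F, (l : F) = k := ⟨_, rfl⟩
  rw [hk] at e e' hl ⊢
  clear_value L
  clear hLd
  obtain ⟨q, e567, e467, e367, e457, e267, e357, e356, e236,
    e123, e124, e125, e134, e126, e135, e235, e256⟩ := h
  refine ⟨L * p14, k * L⁻¹ * p15, L ^ 2 * k⁻¹ * p16, p17,
    k * L⁻¹ ^ 2 * p27, L * k⁻¹ * p37, L⁻¹ * p47, ?_⟩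
  constructor <;> simp only [Matrix.cons_val, map_mul, map_pow, map_inv₀, e, e']
  · rw [← sub_eq_zero.2 q]; field_simp; ring
  · trans (k * L⁻¹ ^ 2) * (L * k⁻¹) * L⁻¹ * 0
    · rw [← e567]; field_simp
    · simp
  · trans 1 * (L * k⁻¹) * L⁻¹ * 0
    · rw [← e467]; field_simp
    · simp
  · trans (L ^ 2 * k⁻¹) * (L * k⁻¹) * L⁻¹ * 0
    · rw [← e367]; field_simp
    · simp
  · trans 1 * (k * L⁻¹ ^ 2) * L⁻¹ * 0
    · rw [← e457]; field_simp
    · simp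
  · trans (k * L⁻¹) * (L * k⁻¹) * L⁻¹ * 0
    · rw [← e267]; field_simp
    · simp
  · trans (L ^ 2 * k⁻¹) * (k * L⁻¹ ^ 2) * L⁻¹ * 0
    · rw [← e357]; field_simp
    · simp
  · trans (L ^ 2 * k⁻¹) * (k * L⁻¹ ^ 2) * (L * k⁻¹) * 0
    · rw [← e356]; field_simp
    · simp
  · trans (k * L⁻¹) * (L ^ 2 * k⁻¹) * (L * k⁻¹) * 0
    · rw [← e236]; field_simp
    · simp
  · trans L * (k * L⁻¹) * (L ^ 2 * k⁻¹) * 0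
    · rw [← e123]; field_simp
    · simp
  · trans L * (k * L⁻¹) * 0
    · rw [← e124]; field_simp
    · simp
  · trans L * (k * L⁻¹) * (k * L⁻¹ ^ 2) * 0
    · rw [← e125]; field_simp
    · simp
  · trans L * (L ^ 2 * k⁻¹) * 0
    · rw [← e134]; field_simp
    · simp
  · trans L * (k * L⁻¹) * (L * k⁻¹) * 0
    · rw [← e126]; field_simp
    · simp
  · trans L * (L ^ 2 * k⁻¹) * (k * L⁻¹ ^ 2) * 0
    · rw [← e135]; field_simp
    · simp
  · trans (k * L⁻¹) * (L ^ 2 * k⁻¹) * (k * L⁻¹ ^ 2) * 0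
    · rw [← e235]; field_simp
    · simp
  · trans (k * L⁻¹) * (k * L⁻¹ ^ 2) * (L * k⁻¹) * 0
    · rw [← e256]; field_simp
    · simp


/-- Matrices preserving all the structure. -/
structure Good {t : ℕ} (D : RD F t) (M : Matrix (Fin 7) (Fin 7) F) : Prop where
  b : ∀ x y, BB (M *ᵥ x) (M *ᵥ y) = BB x y
  t : ∀ x y z, TT (M *ᵥ x) (M *ᵥ y) (M *ᵥ z) = TT x y z
  o : ∀ x, Om D x → Om D (M *ᵥ x)

theorem Good.mul {t : ℕ} {D : RD F t} {M N : Matrix (Fin 7) (Fin 7) F} (hM : Good D M)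
    (hN : Good D N) : Good D (M * N) := by
  constructor
  · intro x y
    rw [← Matrix.mulVec_mulVec, ← Matrix.mulVec_mulVec, hM.b, hN.b]
  · intro x y z
    rw [← Matrix.mulVec_mulVec, ← Matrix.mulVec_mulVec, ← Matrix.mulVec_mulVec, hM.t, hN.t]
  · intro x hx
    rw [← Matrix.mulVec_mulVec]
    exact hM.o _ (hN.o _ hx)

theorem Good.one {t : ℕ} {D : RD F t} : Good D (1 : Matrix (Fin 7) (Fin 7) F) := by
  constructor <;> simp

theorem Om_ne {t : ℕ} (D : RD F t) (x : Fin 7 → F) (h : Om D x) (h6 : x 6 ≠ 0) :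
    ∃ a b c, x = x 6 • vv D a b c := by
  obtain ⟨a, b, c, h'⟩ := Om_one D ((x 6)⁻¹ • x) (Om_smul D _ _ h) (by simp [h6])
  exact ⟨a, b, c, by rw [← h', smul_smul, mul_inv_cancel₀ h6, one_smul]⟩

theorem stab {t : ℕ} (D : RD F t) (M : Matrix (Fin 7) (Fin 7) F) (hM : Good D M)
    (k l : F) (hk : M *ᵥ ee = k • ee) (hl : M *ᵥ vv D 0 0 0 = l • vv D 0 0 0) :
    ∃ κ : Fˣ, M = hmat t κ := by
  have hB : ∀ i j, BB (fun r => M r i) (fun r => M r j) =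
      BB (Pi.single i 1 : Fin 7 → F) (Pi.single j 1) := by
    intro i j
    have := hM.b (Pi.single i 1) (Pi.single j 1)
    rw [Matrix.mulVec_single_one, Matrix.mulVec_single_one] at this
    exact this
  have hT : ∀ i j s, TT (fun r => M r i) (fun r => M r j) (fun r => M r s) =
      TT (Pi.single i 1 : Fin 7 → F) (Pi.single j 1) (Pi.single s 1) := by
    intro i j s
    have := hM.t (Pi.single i 1) (Pi.single j 1) (Pi.single s 1)
    rw [Matrix.mulVec_single_one, Matrix.mulVec_single_one, Matrix.mulVec_single_one] at this
    exact this
  have he : (ee : Fin 7 → F) = Pi.single 0 1 := by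
    ext i; fin_cases i <;> simp [ee]
  have h0 : vv D 0 0 0 = Pi.single 6 1 := by
    ext i; fin_cases i <;> simp [vv]
  rw [he, Matrix.mulVec_single_one] at hk
  rw [h0, Matrix.mulVec_single_one] at hl
  have c0 : ∀ i, M i 0 = k * (Pi.single 0 1 : Fin 7 → F) i := fun i => congrFun hk i
  have c6 : ∀ i, M i 6 = l * (Pi.single 6 1 : Fin 7 → F) i := fun i => congrFun hl i
  have a00 : M 0 0 = k := by simp [c0]
  have a10 : M 1 0 = 0 := by simp [c0]
  have a20 : M 2 0 = 0 := by simp [c0]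
  have a30 : M 3 0 = 0 := by simp [c0]
  have a40 : M 4 0 = 0 := by simp [c0]
  have a50 : M 5 0 = 0 := by simp [c0]
  have a60 : M 6 0 = 0 := by simp [c0]
  have a66 : M 6 6 = l := by simp [c6]
  have a06 : M 0 6 = 0 := by simp [c6]
  have a16 : M 1 6 = 0 := by simp [c6]
  have a26 : M 2 6 = 0 := by simp [c6]
  have a36 : M 3 6 = 0 := by simp [c6]
  have a46 : M 4 6 = 0 := by simp [c6]
  have a56 : M 5 6 = 0 := by simp [c6]
  clear hk hl c0 c6
  have hkl : k * l = 1 := by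
    have := hB 0 6
    simpa [BB, a00, a10, a20, a30, a40, a50, a60, a66] using this
  have hk0 : k ≠ 0 := left_ne_zero_of_mul_eq_one hkl
  have hl0 : l ≠ 0 := right_ne_zero_of_mul_eq_one hkl
  have r6 : ∀ j, j ≠ 6 → M 6 j = 0 := by
    intro j hj
    have := hB 0 j
    simp [BB, a00, a10, a20, a30, a40, a50, a60, hj, hk0] at this
    fin_cases j <;> simp_all
  have r0 : ∀ j, j ≠ 0 → M 0 j = 0 := by
    intro j hj
    have := hB 6 j
    simp [BB, a06, a16, a26, a36, a46, a56, a66, hj, hl0] at this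
    fin_cases j <;> simp_all
  have r3 : ∀ j, M 3 j = (Pi.single j 1 : Fin 7 → F) 3 := by
    intro j
    have := hT 0 j 6
    simp [TT, dd, a00, a10, a20, a30, a40, a50, a60, a06, a16, a26, a36, a46, a56, a66] at this
    linear_combination this + (-M 3 j) * hkl
  have d4 : ∀ j s, j ≠ 6 → s ≠ 6 → k * (M 4 j * M 5 s - M 5 j * M 4 s) =
      TT (Pi.single 0 1 : Fin 7 → F) (Pi.single j 1) (Pi.single s 1) := by
    intro j s hj hs
    have := hT 0 j s
    rw [← this]
    simp [TT, dd, a00, a10, a20, a30, a40, a50, a60, r6 j hj, r6 s hs]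
  have d2 : ∀ j s, j ≠ 0 → s ≠ 0 → l * (M 1 j * M 2 s - M 2 j * M 1 s) =
      TT (Pi.single 6 1 : Fin 7 → F) (Pi.single j 1) (Pi.single s 1) := by
    intro j s hj hs
    have := hT 6 j s
    rw [← this]
    simp [TT, dd, a06, a16, a26, a36, a46, a56, a66, r0 j hj, r0 s hs]
  have d45 : k * (M 4 4 * M 5 5 - M 5 4 * M 4 5) = 1 := by
    rw [d4 4 5 (by decide) (by decide)]; simp [TT, dd]
  have d12 : l * (M 1 1 * M 2 2 - M 2 1 * M 1 2) = 1 := by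
    rw [d2 1 2 (by decide) (by decide)]; simp [TT, dd]
  have z4 : ∀ j, j = 1 ∨ j = 2 ∨ j = 3 → M 4 j = 0 ∧ M 5 j = 0 := by
    intro j hj
    have h6 : j ≠ 6 := by rintro rfl; revert hj; decide
    have A : k * (M 4 j * M 5 4 - M 5 j * M 4 4) = 0 := by
      rw [d4 j 4 h6 (by decide)]; rcases hj with rfl | rfl | rfl <;> simp [TT, dd]
    have B : k * (M 4 j * M 5 5 - M 5 j * M 4 5) = 0 := by
      rw [d4 j 5 h6 (by decide)]; rcases hj with rfl | rfl | rfl <;> simp [TT, dd]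
    constructor
    · linear_combination (-M 4 j) * d45 + M 4 4 * B - M 4 5 * A
    · linear_combination (-M 5 j) * d45 + M 5 4 * B - M 5 5 * A
  have z1 : ∀ j, j = 3 ∨ j = 4 ∨ j = 5 → M 1 j = 0 ∧ M 2 j = 0 := by
    intro j hj
    have h6 : j ≠ 0 := by rintro rfl; revert hj; decide
    have A : l * (M 1 j * M 2 1 - M 2 j * M 1 1) = 0 := by
      rw [d2 j 1 h6 (by decide)]; rcases hj with rfl | rfl | rfl <;> simp [TT, dd]
    have B : l * (M 1 j * M 2 2 - M 2 j * M 1 2) = 0 := by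
      rw [d2 j 2 h6 (by decide)]; rcases hj with rfl | rfl | rfl <;> simp [TT, dd]
    constructor
    · linear_combination (-M 1 j) * d12 + M 1 1 * B - M 1 2 * A
    · linear_combination (-M 2 j) * d12 + M 2 1 * B - M 2 2 * A
  obtain ⟨a41, a51⟩ := z4 1 (by simp)
  obtain ⟨a42, a52⟩ := z4 2 (by simp)
  obtain ⟨a43, a53⟩ := z4 3 (by simp)
  obtain ⟨a13, a23⟩ := z1 3 (by simp)
  obtain ⟨a14, a24⟩ := z1 4 (by simp)
  obtain ⟨a15, a25⟩ := z1 5 (by simp)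
  have a31 : M 3 1 = 0 := by simp [r3]
  have a32 : M 3 2 = 0 := by simp [r3]
  have a33 : M 3 3 = 1 := by simp [r3]
  have a34 : M 3 4 = 0 := by simp [r3]
  have a35 : M 3 5 = 0 := by simp [r3]
  have a01 := r0 1 (by decide)
  have a02 := r0 2 (by decide)
  have a03 := r0 3 (by decide)
  have a04 := r0 4 (by decide)
  have a05 := r0 5 (by decide)
  have a61 := r6 1 (by decide)
  have a62 := r6 2 (by decide)
  have a63 := r6 3 (by decide)
  have a64 := r6 4 (by decide)
  have a65 := r6 5 (by decide)
  -- the point with parameters `(0, 0, 1)`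
  have g1 := hM.o _ (Om_vv D 0 0 1)
  have e1 : M *ᵥ vv D 0 0 1 = ![-k, M 1 1, M 2 1, -1, 0, 0, l] := by
    ext i
    fin_cases i <;> simp [vv, Matrix.mulVec, dotProduct, Fin.sum_univ_succ, *]
  rw [e1] at g1
  obtain ⟨a, b, c, hv⟩ := Om_ne D _ g1 (by simpa using hl0)
  have i5 := congrFun hv 5
  have i4 := congrFun hv 4
  have i3 := congrFun hv 3
  have i2 := congrFun hv 2
  have i1 := congrFun hv 1
  simp only [vv, Pi.smul_apply, smul_eq_mul, Matrix.cons_val] at i1 i2 i3 i4 i5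
  have ha : a = 0 := by
    have : D.th a = 0 := by simpa [hl0] using i5
    simpa using this
  subst ha
  have hb : b = 0 := by
    have : D.th b = 0 := by simpa [hl0] using i4
    simpa using this
  subst hb
  simp at i1 i2 i3
  have hck : D.th c = k := by linear_combination (-k) * i3 - D.th c * hkl
  have hc0 : c ≠ 0 := by rintro rfl; simp at hck; exact hk0 hck.symm
  have a54 : M 5 4 = 0 := by
    have := hB 1 4
    simp [BB, a01, a31, a41, a51, a61, a14, a24, a34, a64, i2] at this
    rcases this with h | h
    · rw [h] at i1; exact absurd i1.symm (mul_ne_zero hl0 hc0)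
    · exact h
  -- the point with parameters `(0, 1, 0)`
  have g2 := hM.o _ (Om_vv D 0 1 0)
  have e2 : M *ᵥ vv D 0 1 0 = ![-k, M 1 2, M 2 2, 0, M 4 4, 0, l] := by
    ext i
    fin_cases i <;> simp [vv, Matrix.mulVec, dotProduct, Fin.sum_univ_succ,
      a54, a00, a01, a02, a03, a04, a05, a06, a10, a13, a14, a15, a16, a20, a23, a24, a25, a26, a30, a31, a32, a33, a34, a35, a36, a40, a41, a42, a43, a46, a50, a51, a52, a53, a56, a60, a61, a62, a63, a64, a65, a66]
  rw [e2] at g2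
  obtain ⟨a', b', c', hv'⟩ := Om_ne D _ g2 (by simpa using hl0)
  have j5 := congrFun hv' 5
  have j3 := congrFun hv' 3
  have j1 := congrFun hv' 1
  simp only [vv, Pi.smul_apply, smul_eq_mul, Matrix.cons_val] at j1 j3 j5
  have ha : a' = 0 := by
    have : D.th a' = 0 := by simpa [hl0] using j5
    simpa using this
  subst ha
  have hc : c' = 0 := by
    have : D.th c' = 0 := by simpa [hl0] using j3
    simpa using this
  subst hc
  simp at j1
  have a45 : M 4 5 = 0 := by
    have := hB 2 5
    simp [BB, a02, a32, a42, a52, a62, a15, a25, a35, a65, j1] at this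
    rcases this with h | h
    · rw [h, i2] at d12; simp at d12
    · exact h
  have b15 : M 1 1 * M 5 5 = 1 := by
    have := hB 1 5
    simpa [BB, a01, a31, a41, a51, a61, a15, a25, a35, a65, i2] using this
  have b24 : M 2 2 * M 4 4 = 1 := by
    have := hB 2 4
    simpa [BB, a02, a32, a42, a52, a62, a14, a24, a34, a64, j1] using this
  refine ⟨Units.mk0 c hc0, ?_⟩
  have hl' : l = k⁻¹ := eq_inv_of_mul_eq_one_right hkl
  have v1 : M 1 1 = c * k⁻¹ := by rw [i1, hl', mul_comm]
  have v5 : M 5 5 = k * c⁻¹ := by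
    rw [v1] at b15; field_simp at b15 ⊢; linear_combination b15
  have v2 : M 2 2 = k ^ 2 * c⁻¹ := by
    rw [v1, i2, hl'] at d12; field_simp at d12 ⊢; linear_combination d12
  have v4 : M 4 4 = c * k⁻¹ ^ 2 := by
    rw [v2] at b24; field_simp at b24 ⊢; linear_combination b24
  apply Matrix.ext_of_mulVec_single
  intro i
  rw [hmat_mulVec D, Matrix.mulVec_single_one]
  simp only [Units.val_mk0, hck]
  ext j
  fin_cases i <;> fin_cases j <;> simp [a54, a45, i2, j1, v1, v2, v4, v5, hl',
    a00, a01, a02, a03, a04, a05, a06, a10, a13, a14, a15, a16, a20, a23, a24, a25, a26, a30, a31, a32, a33, a34, a35, a36, a40, a41, a42, a43, a46, a50, a51, a52, a53, a56, a60, a61, a62, a63, a64, a65, a66]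


/-- Representative vectors of the points of the ovoid. -/
def rep {t : ℕ} (D : RD F t) : Option (F × F × F) → (Fin 7 → F)
  | none => ee
  | some p => vv D p.1 p.2.1 p.2.2

theorem Om_rep {t : ℕ} (D : RD F t) (p : Option (F × F × F)) : Om D (rep D p) := by
  cases p with
  | none => exact Om_ee D
  | some p => exact Om_vv D _ _ _

theorem rep_ne {t : ℕ} (D : RD F t) (p : Option (F × F × F)) : rep D p ≠ 0 := by
  cases p with
  | none => intro h; simpa [rep, ee] using congrFun h 0
  | some p => intro h; simpa [rep, vv] using congrFun h 6

theorem rep_exists {t : ℕ} (D : RD F t) (x : Fin 7 → F) (h : Om D x) (hx : x ≠ 0) :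
    ∃ (p : Option (F × F × F)) (k : F), k ≠ 0 ∧ x = k • rep D p := by
  by_cases h6 : x 6 = 0
  · have h0 := Om_zero D x h h6
    refine ⟨none, x 0, ?_, h0⟩
    intro h'
    rw [h', zero_smul] at h0
    exact hx h0
  · obtain ⟨a, b, c, h'⟩ := Om_ne D x h h6
    exact ⟨some (a, b, c), x 6, h6, h'⟩

theorem rep_unique {t : ℕ} (D : RD F t) (p p' : Option (F × F × F)) (k k' : F) (hk : k ≠ 0)
    (hk' : k' ≠ 0) (h : k • rep D p = k' • rep D p') : p = p' := by
  have hi : Function.Injective D.th := D.th.injective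
  cases p with
  | none =>
    cases p' with
    | none => rfl
    | some p' =>
      exfalso
      have := congrFun h 6
      simp [rep, ee, vv] at this
      exact hk' this.symm
  | some p =>
    cases p' with
    | none =>
      exfalso
      have := congrFun h 6
      simp [rep, ee, vv] at this
      exact hk this
    | some p' =>
      obtain ⟨a, b, c⟩ := p
      obtain ⟨a', b', c'⟩ := p'
      have h6 := congrFun h 6
      simp [rep, vv] at h6
      subst h6
      have h5 := congrFun h 5
      simp [rep, vv, hk] at h5
      replace h5 := hi h5
      subst h5
      have h4 := congrFun h 4
      simp [rep, vv, hk] at h4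
      replace h4 := hi h4
      subst h4
      have h3 := congrFun h 3
      simp [rep, vv, hk] at h3
      replace h3 := hi h3
      subst h3
      rfl

theorem amat_ee {t : ℕ} (D : RD F t) (s : F) : amat t s *ᵥ ee = ee := by
  rw [amat_mulVec D]; ext i; fin_cases i <;> simp [ee]

theorem bmat_ee {t : ℕ} (D : RD F t) (s : F) : bmat t s *ᵥ ee = ee := by
  rw [bmat_mulVec D]; ext i; fin_cases i <;> simp [ee]

theorem cmat_ee {t : ℕ} (D : RD F t) (s : F) : cmat t s *ᵥ ee = ee := by
  rw [cmat_mulVec D]; ext i; fin_cases i <;> simp [ee]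

theorem ups_ee {t : ℕ} (D : RD F t) : ups *ᵥ ee = (-1 : F) • vv D 0 0 0 := by
  rw [ups_mulVec]; ext i; fin_cases i <;> simp [ee, vv]

theorem ups_vv {t : ℕ} (D : RD F t) : ups *ᵥ vv D 0 0 0 = (-1 : F) • ee := by
  rw [ups_mulVec]; ext i; fin_cases i <;> simp [ee, vv]

theorem hmat_ee {t : ℕ} (D : RD F t) (l : Fˣ) : hmat t l *ᵥ ee = D.th l • ee := by
  rw [hmat_mulVec D]; ext i; fin_cases i <;> simp [ee]

theorem hmat_vv {t : ℕ} (D : RD F t) (l : Fˣ) :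
    hmat t l *ᵥ vv D 0 0 0 = (D.th l)⁻¹ • vv D 0 0 0 := by
  rw [hmat_mulVec D]; ext i; fin_cases i <;> simp [vv]

theorem Om_of_rep {t : ℕ} (D : RD F t) (M : Matrix (Fin 7) (Fin 7) F)
    (h : ∀ p, Om D (M *ᵥ rep D p)) (x : Fin 7 → F) (hx : Om D x) : Om D (M *ᵥ x) := by
  by_cases h0 : x = 0
  · subst h0; simpa using hx
  · obtain ⟨p, k, _, rfl⟩ := rep_exists D x hx h0
    rw [Matrix.mulVec_smul]
    exact Om_smul D _ _ (h p)

theorem good_amat {t : ℕ} (D : RD F t) (s : F) : Good D (amat t s) := by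
  refine ⟨amat_BB D s, amat_TT D s, Om_of_rep D _ ?_⟩
  rintro (_ | p)
  · simpa only [rep, amat_ee D] using Om_ee D
  · simpa only [rep, amat_vv D] using Om_vv D _ _ _

theorem good_bmat {t : ℕ} (D : RD F t) (s : F) : Good D (bmat t s) := by
  refine ⟨bmat_BB D s, bmat_TT D s, Om_of_rep D _ ?_⟩
  rintro (_ | p)
  · simpa only [rep, bmat_ee D] using Om_ee D
  · simpa only [rep, bmat_vv D] using Om_vv D _ _ _

theorem good_cmat {t : ℕ} (D : RD F t) (s : F) : Good D (cmat t s) := by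
  refine ⟨cmat_BB D s, cmat_TT D s, Om_of_rep D _ ?_⟩
  rintro (_ | p)
  · simpa only [rep, cmat_ee D] using Om_ee D
  · simpa only [rep, cmat_vv D] using Om_vv D _ _ _

theorem good_hmat {t : ℕ} (D : RD F t) (l : Fˣ) : Good D (hmat t l) :=
  ⟨hmat_BB D l, hmat_TT D l, Om_hmat D l⟩

theorem good_ups {t : ℕ} (D : RD F t) : Good D ups :=
  ⟨ups_BB, ups_TT, Om_ups D⟩

theorem good_pow {t : ℕ} (D : RD F t) (M : Matrix (Fin 7) (Fin 7) F) (h : Good D M) (n : ℕ) :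
    Good D (M ^ n) := by
  induction n with
  | zero => rw [pow_zero]; exact Good.one
  | succ n ih => rw [pow_succ]; exact ih.mul h

theorem good_mem {t : ℕ} (D : RD F t) (g : GL (Fin 7) F) (hg : g ∈ ReeGroup t) :
    Good D (g : Matrix (Fin 7) (Fin 7) F) := by
  unfold ReeGroup at hg
  induction hg using Subgroup.closure_induction with
  | mem x hx =>
    rcases hx with ⟨s, h⟩ | ⟨s, h⟩ | ⟨s, h⟩ | ⟨s, h⟩ | h <;> rw [h]
    · exact good_amat D s
    · exact good_bmat D s
    · exact good_cmat D s
    · exact good_hmat D s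
    · exact good_ups D
  | one => exact Good.one
  | mul x y _ _ hx hy => exact hx.mul hy
  | inv x _ hx =>
    have : Finite (GL (Fin 7) F) := inferInstance
    have h1 : x⁻¹ = x ^ (orderOf x - 1) := by
      rw [inv_eq_iff_mul_eq_one, ← pow_succ', Nat.sub_add_cancel (orderOf_pos x),
        pow_orderOf_eq_one]
    rw [h1, Units.val_pow_eq_pow_val]
    exact good_pow D _ hx _

theorem amat_det (t : ℕ) (s : F) : (amat t s).det = 1 := by
  rw [Matrix.det_of_isUpperTriangular]
  · simp [amat, Fin.prod_univ_succ]
  · intro i j h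
    fin_cases i <;> fin_cases j <;> simp_all [amat]

theorem bmat_det (t : ℕ) (s : F) : (bmat t s).det = 1 := by
  rw [Matrix.det_of_isUpperTriangular]
  · simp [bmat, Fin.prod_univ_succ]
  · intro i j h
    fin_cases i <;> fin_cases j <;> simp_all [bmat]

theorem cmat_det (t : ℕ) (s : F) : (cmat t s).det = 1 := by
  rw [Matrix.det_of_isUpperTriangular]
  · simp [cmat, Fin.prod_univ_succ]
  · intro i j h
    fin_cases i <;> fin_cases j <;> simp_all [cmat]

theorem hmat_mul (t : ℕ) (l l' : Fˣ) : hmat t l * hmat t l' = hmat t (l * l') := by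
  unfold hmat
  rw [Matrix.diagonal_mul_diagonal]
  congr 1
  ext i
  fin_cases i <;> simp [mul_zpow, mul_pow, mul_comm]

theorem hmat_one (t : ℕ) : hmat t (1 : Fˣ) = 1 := by
  unfold hmat
  rw [← Matrix.diagonal_one]
  congr 1
  ext i
  fin_cases i <;> simp

theorem ups_ups : (ups : Matrix (Fin 7) (Fin 7) F) * ups = 1 := by
  apply Matrix.ext_of_mulVec_single
  intro i
  rw [← Matrix.mulVec_mulVec, ups_mulVec, ups_mulVec, Matrix.one_mulVec]
  ext j
  fin_cases j <;> simp

theorem ups_hmat_ups {t : ℕ} (D : RD F t) (l : Fˣ) : ups * hmat t l * ups = hmat t l⁻¹ := by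
  apply Matrix.ext_of_mulVec_single
  intro i
  rw [← Matrix.mulVec_mulVec, ← Matrix.mulVec_mulVec, ups_mulVec, hmat_mulVec D, ups_mulVec,
    hmat_mulVec D]
  ext j
  fin_cases j <;> simp [mul_comm]

theorem amat_mem (t : ℕ) (s : F) :
    ∃ g : GL (Fin 7) F, g ∈ ReeGroup t ∧ (g : Matrix (Fin 7) (Fin 7) F) = amat t s := by
  have h : IsUnit (amat t s) := by rw [Matrix.isUnit_iff_isUnit_det, amat_det]; exact isUnit_one
  exact ⟨h.unit, Subgroup.subset_closure (Or.inl ⟨s, rfl⟩), rfl⟩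

theorem bmat_mem (t : ℕ) (s : F) :
    ∃ g : GL (Fin 7) F, g ∈ ReeGroup t ∧ (g : Matrix (Fin 7) (Fin 7) F) = bmat t s := by
  have h : IsUnit (bmat t s) := by rw [Matrix.isUnit_iff_isUnit_det, bmat_det]; exact isUnit_one
  exact ⟨h.unit, Subgroup.subset_closure (Or.inr (Or.inl ⟨s, rfl⟩)), rfl⟩

theorem cmat_mem (t : ℕ) (s : F) :
    ∃ g : GL (Fin 7) F, g ∈ ReeGroup t ∧ (g : Matrix (Fin 7) (Fin 7) F) = cmat t s := by
  have h : IsUnit (cmat t s) := by rw [Matrix.isUnit_iff_isUnit_det, cmat_det]; exact isUnit_one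
  exact ⟨h.unit, Subgroup.subset_closure (Or.inr (Or.inr (Or.inl ⟨s, rfl⟩))), rfl⟩

/-- `h(λ)` as an element of `GL`. -/
def hGL (t : ℕ) (l : Fˣ) : GL (Fin 7) F :=
  ⟨hmat t l, hmat t l⁻¹, by rw [hmat_mul, mul_inv_cancel, hmat_one],
    by rw [hmat_mul, inv_mul_cancel, hmat_one]⟩

/-- `Υ` as an element of `GL`. -/
def upsGL : GL (Fin 7) F := ⟨ups, ups, ups_ups, ups_ups⟩

theorem hGL_mem (t : ℕ) (l : Fˣ) : hGL t l ∈ ReeGroup t :=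
  Subgroup.subset_closure (Or.inr (Or.inr (Or.inr (Or.inl ⟨l, rfl⟩))))

theorem upsGL_mem (t : ℕ) : (upsGL : GL (Fin 7) F) ∈ ReeGroup t :=
  Subgroup.subset_closure (Or.inr (Or.inr (Or.inr (Or.inr rfl))))

section count
open Finset
variable {G Ω : Type*} [Group G] [Fintype G] [Fintype Ω] [DecidableEq Ω] [DecidableEq G]
  [MulAction G Ω]

theorem orderOf_conj (h g : G) : orderOf (h * g * h⁻¹) = orderOf g := by
  rw [← MulAut.conj_apply, MulEquiv.orderOf_eq]

theorem conj_card (h : G) (x y x' y' : Ω) :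
    #{g : G | orderOf g = 2 ∧ g • (h • x) = h • x' ∧ g • (h • y) = h • y'} =
    #{g : G | orderOf g = 2 ∧ g • x = x' ∧ g • y = y'} := by
  symm
  apply Finset.card_bij (fun g _ => h * g * h⁻¹)
  · intro g hg
    simp only [mem_filter, mem_univ, true_and] at hg ⊢
    obtain ⟨h1, h2, h3⟩ := hg
    refine ⟨by rw [orderOf_conj, h1], ?_, ?_⟩ <;> simp [mul_smul, *]
  · intro a _ b _ hab
    simpa using hab
  · intro g hg
    simp only [mem_filter, mem_univ, true_and] at hg
    obtain ⟨h1, h2, h3⟩ := hg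
    refine ⟨h⁻¹ * g * h, ?_, by group⟩
    simp only [mem_filter, mem_univ, true_and]
    refine ⟨?_, by simp [mul_smul, *], by simp [mul_smul, *]⟩
    have := orderOf_conj h⁻¹ g
    rw [inv_inv] at this
    rw [this, h1]

theorem count (q : ℕ) (hq : Odd q) (hq1 : 1 < q)
    (hΩ : Fintype.card Ω = q ^ 3 + 1) (i o : Ω)
    (h2 : ∀ x y : Ω, x ≠ y → ∃ g : G, g • i = x ∧ g • o = y)
    (j : G) (hj : ∀ g : G, (orderOf g = 2 ∧ g • i = i ∧ g • o = o) ↔ g = j)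
    (hjf : #{x : Ω | j • x = x} = q + 1)
    (hsw : #{g : G | orderOf g = 2 ∧ g • i = o ∧ g • o = i} = q - 1) :
    #{g : G | orderOf g = 2} = q ^ 2 * (q ^ 2 - q + 1) := by
  set I : Finset G := {g : G | orderOf g = 2} with hI
  let f : G → ℕ := fun g => #{x : Ω | g • x = x}
  have hfix : ∀ x y : Ω, x ≠ y → #{g : G | orderOf g = 2 ∧ g • x = x ∧ g • y = y} = 1 := by
    intro x y hxy
    obtain ⟨h, rfl, rfl⟩ := h2 x y hxy
    rw [conj_card]
    exact Finset.card_eq_one.2 ⟨j, by ext g; simp [hj]⟩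
  have hswp : ∀ x y : Ω, x ≠ y → #{g : G | orderOf g = 2 ∧ g • x = y ∧ g • y = x} = q - 1 := by
    intro x y hxy
    obtain ⟨h, rfl, rfl⟩ := h2 x y hxy
    rw [conj_card, hsw]
  have hoff : #(univ : Finset Ω).offDiag = (q ^ 3 + 1) * q ^ 3 := by
    rw [offDiag_card, card_univ, hΩ]
    rw [← Nat.mul_sub_one, Nat.add_sub_cancel]
  have hf : ∀ g ∈ I, f g * f g = f g + q * f g := by
    intro g hg
    have hg2 : orderOf g = 2 := by simpa [hI] using hg
    have hgg : g ^ 2 = 1 := by rw [← hg2, pow_orderOf_eq_one]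
    by_cases h0 : f g = 0
    · simp [h0]
    have hpar : Fintype.card Ω ≡ f g [MOD 2] := by
      have := Equiv.Perm.card_fixedPoints_modEq (p := 2) (n := 1)
        (f := fun x : Ω => g • x) (by
          funext x
          change g • g • x = x
          rw [← mul_smul, ← sq, hgg, one_smul])
      refine this.trans ?_
      rw [Fintype.card_subtype]
      rfl
    have hev : Even (q ^ 3 + 1) := by
      rw [Nat.even_add_one, Nat.not_even_iff_odd]; exact hq.pow
    have hone : 1 < #{x : Ω | g • x = x} := by
      have h1 : f g % 2 = 0 := by
        rw [← hpar, hΩ]; exact Nat.even_iff.1 hev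
      change 1 < f g
      omega
    obtain ⟨x, hx, y, hy, hxy⟩ := Finset.one_lt_card.1 hone
    simp only [mem_filter, mem_univ, true_and] at hx hy
    obtain ⟨h, rfl, rfl⟩ := h2 x y hxy
    have hc : h⁻¹ * g * h = j := by
      rw [← hj]
      refine ⟨?_, by simp [mul_smul, *], by simp [mul_smul, *]⟩
      have := orderOf_conj h⁻¹ g
      rw [inv_inv] at this
      rw [this, hg2]
    have : f g = q + 1 := by
      rw [← hjf]
      symm
      apply Finset.card_bij (fun x _ => h • x)
      · intro x hx
        simp only [mem_filter, mem_univ, true_and] at hx ⊢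
        rw [← hc, mul_smul, mul_smul, inv_smul_eq_iff] at hx
        exact hx
      · intro a _ b _ hab
        simpa using hab
      · intro x hx
        simp only [mem_filter, mem_univ, true_and] at hx
        refine ⟨h⁻¹ • x, ?_, by simp⟩
        simp only [mem_filter, mem_univ, true_and]
        rw [← hc, mul_smul, mul_smul, inv_smul_eq_iff]
        simp [hx]
    rw [this]; ring
  have s1 : ∑ g ∈ I, #{p ∈ (univ : Finset Ω).offDiag | g • p.1 = p.1 ∧ g • p.2 = p.2}
      = (q ^ 3 + 1) * q ^ 3 := by
    have := Finset.sum_card_bipartiteAbove_eq_sum_card_bipartiteBelow (s := I)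
      (t := (univ : Finset Ω).offDiag) (fun g p => g • p.1 = p.1 ∧ g • p.2 = p.2)
    refine this.trans ?_
    rw [← hoff, ← mul_one (#(univ : Finset Ω).offDiag)]
    apply Finset.sum_const_nat
    rintro ⟨x, y⟩ hxy
    rw [Finset.bipartiteBelow, hI, Finset.filter_filter]
    exact hfix x y (by simpa using hxy)
  have s2 : ∑ g ∈ I, #{p ∈ (univ : Finset Ω).offDiag | g • p.1 = p.2 ∧ g • p.2 = p.1}
      = (q ^ 3 + 1) * q ^ 3 * (q - 1) := by
    have := Finset.sum_card_bipartiteAbove_eq_sum_card_bipartiteBelow (s := I)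
      (t := (univ : Finset Ω).offDiag) (fun g p => g • p.1 = p.2 ∧ g • p.2 = p.1)
    refine this.trans ?_
    rw [← hoff]
    apply Finset.sum_const_nat
    rintro ⟨x, y⟩ hxy
    rw [Finset.bipartiteBelow, hI, Finset.filter_filter]
    exact hswp x y (by simpa using hxy)
  have t1 : ∀ g ∈ I, #{p ∈ (univ : Finset Ω).offDiag | g • p.1 = p.1 ∧ g • p.2 = p.2}
      = q * f g := by
    intro g hg
    have e : ({p ∈ (univ : Finset Ω).offDiag | g • p.1 = p.1 ∧ g • p.2 = p.2} : Finset (Ω × Ω))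
        = ({x : Ω | g • x = x} : Finset Ω).offDiag := by
      ext p; simp; tauto
    rw [e, offDiag_card]
    have := hf g hg
    change f g * f g - f g = _
    omega
  have t2 : ∀ g ∈ I, #{p ∈ (univ : Finset Ω).offDiag | g • p.1 = p.2 ∧ g • p.2 = p.1} + f g
      = q ^ 3 + 1 := by
    intro g hg
    have hg2 : orderOf g = 2 := by simpa [hI] using hg
    have hgg : g ^ 2 = 1 := by rw [← hg2, pow_orderOf_eq_one]
    have hgg' : ∀ x : Ω, g • g • x = x := fun x => by rw [← mul_smul, ← sq, hgg, one_smul]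
    have e : #{p ∈ (univ : Finset Ω).offDiag | g • p.1 = p.2 ∧ g • p.2 = p.1} =
        #{x : Ω | ¬ g • x = x} := by
      symm
      apply Finset.card_bij (fun x _ => (x, g • x))
      · intro x hx
        simp only [mem_filter, mem_univ, true_and] at hx
        simp [hgg', Ne.symm hx, eq_comm]
      · intro a _ b _ hab
        simp at hab
        exact hab
      · rintro ⟨x, y⟩ hxy
        simp at hxy
        refine ⟨x, ?_, ?_⟩
        · simp [hxy.2.1, Ne.symm hxy.1]
        · simp [hxy.2.1]
    rw [e, add_comm, ← hΩ, ← Finset.card_univ]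
    exact Finset.card_filter_add_card_filter_not _
  rw [Finset.sum_congr rfl t1, ← Finset.mul_sum] at s1
  have s3 := Finset.sum_congr (rfl : I = I) t2
  rw [Finset.sum_add_distrib, s2, Finset.sum_const, smul_eq_mul] at s3
  have s4 : ∑ g ∈ I, f g = (q ^ 3 + 1) * q ^ 2 := by
    apply Nat.eq_of_mul_eq_mul_left (by omega : 0 < q)
    rw [s1]; ring
  rw [s4] at s3
  apply Nat.eq_of_mul_eq_mul_right (by omega : 0 < q ^ 3 + 1)
  rw [← s3]
  obtain ⟨r, rfl⟩ : ∃ r, q = r + 1 := ⟨q - 1, by omega⟩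
  have : (r + 1) ^ 2 - (r + 1) = r * (r + 1) := by
    rw [sq, ← Nat.sub_one_mul, Nat.add_sub_cancel]
  rw [this, Nat.add_sub_cancel]
  ring

end count

theorem act_exists {t : ℕ} (D : RD F t) (g : GL (Fin 7) F) (hg : g ∈ ReeGroup t)
    (p : Option (F × F × F)) :
    ∃ (p' : Option (F × F × F)) (k : F), k ≠ 0 ∧
      (g : Matrix (Fin 7) (Fin 7) F) *ᵥ rep D p = k • rep D p' := by
  apply rep_exists D _ ((good_mem D g hg).o _ (Om_rep D p))
  intro h
  apply rep_ne D p
  have := congrArg (fun v => ((g⁻¹ : GL (Fin 7) F) : Matrix (Fin 7) (Fin 7) F) *ᵥ v) h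
  simpa [Matrix.mulVec_mulVec] using this

/-- The action on points. -/
def act {t : ℕ} (D : RD F t) (g : ReeGroup (F := F) t) (p : Option (F × F × F)) :
    Option (F × F × F) :=
  (act_exists D g.1 g.2 p).choose

theorem act_spec {t : ℕ} (D : RD F t) (g : ReeGroup (F := F) t) (p : Option (F × F × F)) :
    ∃ k : F, k ≠ 0 ∧
      ((g : GL (Fin 7) F) : Matrix (Fin 7) (Fin 7) F) *ᵥ rep D p = k • rep D (act D g p) :=
  (act_exists D g.1 g.2 p).choose_spec

theorem act_eq {t : ℕ} (D : RD F t) (g : ReeGroup (F := F) t) (p p' : Option (F × F × F)) (k : F)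
    (hk : k ≠ 0)
    (h : ((g : GL (Fin 7) F) : Matrix (Fin 7) (Fin 7) F) *ᵥ rep D p = k • rep D p') :
    act D g p = p' := by
  obtain ⟨k', hk', h'⟩ := act_spec D g p
  exact rep_unique D _ _ k' k hk' hk (h'.symm.trans h)

/-- The action of the Ree group on the ovoid. -/
@[reducible] def reeAction {t : ℕ} (D : RD F t) :
    MulAction (ReeGroup (F := F) t) (Option (F × F × F)) where
  smul g p := act D g p
  one_smul p := act_eq D 1 p p 1 one_ne_zero (by simp)
  mul_smul g h p := by
    obtain ⟨k, hk, h1⟩ := act_spec D h p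
    obtain ⟨k', hk', h2⟩ := act_spec D g (act D h p)
    refine act_eq D _ _ _ (k * k') (mul_ne_zero hk hk') ?_
    rw [Subgroup.coe_mul, Units.val_mul, ← Matrix.mulVec_mulVec, h1, Matrix.mulVec_smul, h2,
      smul_smul]
    rfl

theorem move_zero {t : ℕ} (D : RD F t) (a b c : F) :
    ∃ g : ReeGroup (F := F) t, act D g none = none ∧ act D g (some (0, 0, 0)) = some (a, b, c) := by
  obtain ⟨x, hx, ex⟩ := amat_mem t a
  obtain ⟨y, hy, ey⟩ := bmat_mem t b
  obtain ⟨z, hz, ez⟩ := cmat_mem t (c + a * b)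
  refine ⟨⟨z * y * x, mul_mem (mul_mem hz hy) hx⟩, act_eq D _ _ _ 1 one_ne_zero ?_,
    act_eq D _ _ _ 1 one_ne_zero ?_⟩
  · simp only [Units.val_mul, ex, ey, ez, ← Matrix.mulVec_mulVec, rep]
    rw [amat_ee D, bmat_ee D, cmat_ee D, one_smul]
  · simp only [Units.val_mul, ex, ey, ez, ← Matrix.mulVec_mulVec, rep]
    rw [amat_vv D, bmat_vv D, cmat_vv D, one_smul]
    congr 1 <;> simp

theorem act_hGL {t : ℕ} (D : RD F t) (l : Fˣ) :
    act D ⟨hGL t l, hGL_mem t l⟩ none = none ∧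
      act D ⟨hGL t l, hGL_mem t l⟩ (some (0, 0, 0)) = some (0, 0, 0) := by
  have hl : D.th l ≠ 0 := (map_ne_zero D.th).2 l.ne_zero
  exact ⟨act_eq D _ _ _ _ hl (hmat_ee D l), act_eq D _ _ _ _ (inv_ne_zero hl) (hmat_vv D l)⟩

theorem act_ups {t : ℕ} (D : RD F t) :
    act D ⟨upsGL, upsGL_mem t⟩ none = some (0, 0, 0) ∧
      act D ⟨upsGL, upsGL_mem t⟩ (some (0, 0, 0)) = none :=
  ⟨act_eq D _ _ _ (-1) (by simp) (ups_ee D), act_eq D _ _ _ (-1) (by simp) (ups_vv D)⟩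

theorem stab_act {t : ℕ} (D : RD F t) (g : ReeGroup (F := F) t) (h0 : act D g none = none)
    (h1 : act D g (some (0, 0, 0)) = some (0, 0, 0)) :
    ∃ l : Fˣ, g = ⟨hGL t l, hGL_mem t l⟩ := by
  obtain ⟨k, _, hk⟩ := act_spec D g none
  obtain ⟨l, _, hl⟩ := act_spec D g (some (0, 0, 0))
  rw [h0] at hk
  rw [h1] at hl
  obtain ⟨κ, h⟩ := stab D _ (good_mem D _ g.2) k l hk hl
  exact ⟨κ, Subtype.ext (Units.ext h)⟩

theorem hmat_inj {t : ℕ} (D : RD F t) (l l' : Fˣ) (h : hmat t l = hmat t l') : l = l' := by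
  have h1 := hmat_ee D l
  rw [h, hmat_ee D] at h1
  have := congrFun h1 0
  simp [ee] at this
  exact (Units.ext (D.th.injective this)).symm

theorem two_trans {t : ℕ} (D : RD F t) (x y : Option (F × F × F)) (hxy : x ≠ y) :
    ∃ g : ReeGroup (F := F) t, act D g none = x ∧ act D g (some (0, 0, 0)) = y := by
  let _ := reeAction D
  change ∃ g : ReeGroup (F := F) t, g • none = x ∧ g • (some (0, 0, 0)) = y
  have key : ∀ x : Option (F × F × F), ∃ g : ReeGroup (F := F) t, g • none = x := by
    rintro (_ | ⟨a, b, c⟩)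
    · exact ⟨1, one_smul _ _⟩
    · obtain ⟨g, _, hg⟩ := move_zero D a b c
      refine ⟨g * ⟨upsGL, upsGL_mem t⟩, ?_⟩
      rw [mul_smul]
      change act D g (act D _ _) = _
      rw [(act_ups D).1, hg]
  obtain ⟨g, rfl⟩ := key x
  have hne : g⁻¹ • y ≠ none := by
    intro h; apply hxy; rw [← h, smul_inv_smul]
  obtain ⟨⟨a, b, c⟩, hp⟩ := Option.ne_none_iff_exists'.1 hne
  obtain ⟨h, h1, h2⟩ := move_zero D a b c
  refine ⟨g * h, ?_, ?_⟩
  · rw [mul_smul]; change g • (act D h _) = _; rw [h1]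
  · rw [mul_smul]; change g • (act D h _) = _; rw [h2, ← hp, smul_inv_smul]

theorem two_ne {t : ℕ} (D : RD F t) : (2 : F) ≠ 0 := by
  intro h
  have h3 := D.three
  exact one_ne_zero (by linear_combination h3 - h : (1 : F) = 0)

theorem neg_fix {t : ℕ} (D : RD F t) (a : F) : -a = a ↔ a = 0 := by
  constructor
  · intro h
    have : 2 * a = 0 := by linear_combination -h
    exact (mul_eq_zero.1 this).resolve_left (two_ne D)
  · rintro rfl; simp

/-- The element `h(λ)` in the Ree group. -/
def hR (t : ℕ) (l : Fˣ) : ReeGroup (F := F) t := ⟨hGL t l, hGL_mem t l⟩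

/-- The element `Υ` in the Ree group. -/
def uR (t : ℕ) : ReeGroup (F := F) t := ⟨upsGL, upsGL_mem t⟩

theorem hR_mul (t : ℕ) (l l' : Fˣ) : hR t l * hR t l' = hR t (l * l') :=
  Subtype.ext (Units.ext (hmat_mul t l l'))

theorem hR_one (t : ℕ) : hR t (1 : Fˣ) = 1 :=
  Subtype.ext (Units.ext (hmat_one t))

theorem hR_inj {t : ℕ} (D : RD F t) (l l' : Fˣ) (h : hR t l = hR t l') : l = l' := by
  apply hmat_inj D
  exact congrArg (fun g : ReeGroup (F := F) t => ((g : GL (Fin 7) F) : Matrix (Fin 7) (Fin 7) F)) h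

theorem uR_mul (t : ℕ) : uR t * uR t = (1 : ReeGroup (F := F) t) :=
  Subtype.ext (Units.ext ups_ups)

theorem uR_hR_uR {t : ℕ} (D : RD F t) (l : Fˣ) : uR t * hR t l * uR t = hR t l⁻¹ :=
  Subtype.ext (Units.ext (ups_hmat_ups D l))

theorem hR_neg_act {t : ℕ} (D : RD F t) (a b c : F) :
    act D (hR t (-1)) (some (a, b, c)) = some (-a, b, -c) := by
  apply act_eq D _ _ _ (-1) (by simp)
  change hmat t (-1) *ᵥ vv D a b c = (-1 : F) • vv D (-a) b (-c)
  rw [hmat_mulVec D]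
  ext i
  fin_cases i <;> simp [vv] <;> ring

theorem fix_card {t : ℕ} (D : RD F t) [DecidableEq F] :
    Finset.card {x : Option (F × F × F) | act D (hR t (-1)) x = x} = Fintype.card F + 1 := by
  have e : ({x : Option (F × F × F) | act D (hR t (-1)) x = x} : Finset (Option (F × F × F))) =
      Finset.image (Option.map (fun b : F => ((0 : F), b, (0 : F)))) Finset.univ := by
    ext x
    simp only [Finset.mem_filter, Finset.mem_univ, true_and, Finset.mem_image]
    rcases x with _ | ⟨a, b, c⟩
    · exact ⟨fun _ => ⟨none, rfl⟩, fun _ => (act_hGL D (-1)).1⟩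
    · rw [hR_neg_act]
      simp only [Option.some.injEq, Prod.mk.injEq, neg_fix D]
      constructor
      · rintro ⟨rfl, -, rfl⟩
        exact ⟨some b, rfl⟩
      · rintro ⟨_ | y, hy⟩
        · simp at hy
        · simp at hy
          simp [← hy.1, ← hy.2.2]
  rw [e, Finset.card_image_of_injective _ (Option.map_injective (fun x y h => by simpa using h)),
    Finset.card_univ, Fintype.card_option]

theorem neg_one_unit_ne {t : ℕ} (D : RD F t) : (-1 : Fˣ) ≠ 1 := by
  intro h
  have := congrArg (fun u : Fˣ => (u : F)) h
  simp only [Units.val_neg, Units.val_one] at this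
  exact one_ne_zero ((neg_fix D 1).1 this)

theorem inv_fix {t : ℕ} (D : RD F t) (g : ReeGroup (F := F) t) :
    (orderOf g = 2 ∧ act D g none = none ∧ act D g (some (0, 0, 0)) = some (0, 0, 0)) ↔
      g = hR t (-1) := by
  constructor
  · rintro ⟨h, h0, h1⟩
    obtain ⟨l, rfl⟩ := stab_act D g h0 h1
    change orderOf (hR t l) = 2 at h
    change hR t l = _
    have h2 : hR t (l * l) = hR t 1 := by
      rw [← hR_mul, hR_one, ← sq, ← h, pow_orderOf_eq_one]
    have h3 := hR_inj D _ _ h2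
    have h4 : (l : F) * l = 1 := by rw [← Units.val_mul, h3, Units.val_one]
    rcases mul_self_eq_one_iff.1 h4 with h5 | h5
    · have : l = 1 := Units.ext h5
      rw [this, hR_one, orderOf_one] at h
      omega
    · have : l = -1 := Units.ext (by simpa using h5)
      rw [this]
  · rintro rfl
    refine ⟨orderOf_eq_prime ?_ ?_, (act_hGL D (-1)).1, (act_hGL D (-1)).2⟩
    · rw [sq, hR_mul, ← hR_one]; simp
    · rw [← hR_one]
      exact fun h => neg_one_unit_ne D (hR_inj D _ _ h)

theorem swap_card {t : ℕ} (D : RD F t) [DecidableEq F] [Fintype (ReeGroup (F := F) t)] :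
    Finset.card {g : ReeGroup (F := F) t | orderOf g = 2 ∧ act D g none = some (0, 0, 0) ∧
      act D g (some (0, 0, 0)) = none} = Fintype.card F - 1 := by
  let _ := reeAction D
  classical
  have e : ({g : ReeGroup (F := F) t | orderOf g = 2 ∧ act D g none = some (0, 0, 0) ∧
      act D g (some (0, 0, 0)) = none} : Finset (ReeGroup (F := F) t)) =
      Finset.image (fun l : Fˣ => hR t l * uR t) Finset.univ := by
    ext g
    simp only [Finset.mem_filter, Finset.mem_univ, true_and, Finset.mem_image]
    constructor
    · rintro ⟨-, h0, h1⟩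
      have a0 : act D (g * uR t) none = none := by
        change (g * uR t) • (none : Option (F × F × F)) = none
        rw [mul_smul]
        change act D g (act D _ _) = _
        rw [uR, (act_ups D).1, h1]
      have a1 : act D (g * uR t) (some (0, 0, 0)) = some (0, 0, 0) := by
        change (g * uR t) • (some (0, 0, 0) : Option (F × F × F)) = some (0, 0, 0)
        rw [mul_smul]
        change act D g (act D _ _) = _
        rw [uR, (act_ups D).2, h0]
      obtain ⟨l, hl⟩ := stab_act D _ a0 a1
      refine ⟨l, ?_⟩
      change g * uR t = hR t l at hl
      rw [← hl, mul_assoc, uR_mul, mul_one]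
    · rintro ⟨l, rfl⟩
      have a0 : act D (hR t l * uR t) none = some (0, 0, 0) := by
        change (hR t l * uR t) • (none : Option (F × F × F)) = _
        rw [mul_smul]
        change act D _ (act D _ _) = _
        rw [uR, (act_ups D).1, hR, (act_hGL D l).2]
      have a1 : act D (hR t l * uR t) (some (0, 0, 0)) = none := by
        change (hR t l * uR t) • (some (0, 0, 0) : Option (F × F × F)) = _
        rw [mul_smul]
        change act D _ (act D _ _) = _
        rw [uR, (act_ups D).2, hR, (act_hGL D l).1]
      refine ⟨orderOf_eq_prime ?_ ?_, a0, a1⟩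
      · rw [sq, mul_assoc, ← mul_assoc (uR t), uR_hR_uR D, hR_mul, mul_inv_cancel, hR_one]
      · intro h
        rw [h] at a0
        have : act D (1 : ReeGroup (F := F) t) none = none :=
          one_smul (ReeGroup (F := F) t) (none : Option (F × F × F))
        rw [this] at a0
        simp at a0
  rw [e, Finset.card_image_of_injective _
    (fun x y h => hR_inj D _ _ (mul_right_cancel h)), Finset.card_univ, Fintype.card_units]

theorem main_count {t : ℕ} (D : RD F t) (hq : Odd (Fintype.card F)) :
    Nat.card {g : GL (Fin 7) F // g ∈ ReeGroup (F := F) t ∧ orderOf g = 2} =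
      (Fintype.card F) ^ 2 * ((Fintype.card F) ^ 2 - Fintype.card F + 1) := by
  classical
  let _ := reeAction D
  let _ : Fintype (ReeGroup (F := F) t) := Fintype.ofFinite _
  have h := count (G := ReeGroup (F := F) t) (Ω := Option (F × F × F)) (Fintype.card F) hq
    Fintype.one_lt_card (by simp; ring) none (some (0, 0, 0)) (two_trans D) (hR t (-1))
    (inv_fix D) (by convert fix_card D; rfl) (by convert swap_card D <;> rfl)
  rw [← h, ← Fintype.card_subtype, ← Nat.card_eq_fintype_card]
  apply Nat.card_congr
  exact {
    toFun := fun g => ⟨⟨g.1, g.2.1⟩, by rw [← Subgroup.orderOf_coe]; exact g.2.2⟩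
    invFun := fun g => ⟨g.1.1, g.1.2, by rw [Subgroup.orderOf_coe]; exact g.2⟩
    left_inv := fun g => rfl
    right_inv := fun g => rfl }

/-- The field data of a finite field with `3 ^ (2m+1)` elements. -/
theorem exists_RD (m : ℕ) (hF : Fintype.card F = 3 ^ (2 * m + 1)) : Nonempty (RD F (3 ^ m)) := by
  have : Fact (Nat.Prime 3) := ⟨Nat.prime_three⟩
  have hc : CharP F 3 := by
    obtain ⟨p, hp⟩ := CharP.exists F
    obtain ⟨n, hpp, hn⟩ := FiniteField.card F p
    rw [hF] at hn
    have h3 : 3 ∣ p := by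
      have : 3 ∣ p ^ (n : ℕ) := hn ▸ dvd_pow_self 3 (by omega)
      exact Nat.prime_three.dvd_of_dvd_pow this
    have : 3 = p := (Nat.prime_dvd_prime_iff_eq Nat.prime_three hpp).1 h3
    subst this
    exact hp
  refine ⟨⟨by exact_mod_cast CharP.cast_eq_zero F 3, iterateFrobenius F 3 m,
    iterateFrobenius F 3 (m + 1), fun x => ?_, fun x => ?_, fun x => ?_⟩⟩
  · rw [iterateFrobenius_def]
  · rw [iterateFrobenius_def, iterateFrobenius_def, ← pow_mul, pow_succ]
  · rw [iterateFrobenius_def, iterateFrobenius_def, ← pow_mul, ← pow_add]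
    have : m + (m + 1) = 2 * m + 1 := by ring
    rw [this, ← hF, FiniteField.pow_card]

end ReePaper

open ReePaper

/-- The number of involutions in `Ree(q)` equals `q^2 (q^2 - q + 1)`. -/
theorem involution_count (m : ℕ) (hm : 0 < m) (F : Type*) [Field F] [Fintype F]
    (hF : Fintype.card F = 3 ^ (2 * m + 1)) :
    Nat.card {g : GL (Fin 7) F // g ∈ ReeGroup (F := F) (3 ^ m) ∧ orderOf g = 2} =
      (3 ^ (2 * m + 1)) ^ 2 * ((3 ^ (2 * m + 1)) ^ 2 - 3 ^ (2 * m + 1) + 1) := by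
  obtain ⟨D⟩ := exists_RD (F := F) m hF
  rw [← hF]
  apply main_count D
  rw [hF]
  exact Odd.pow (by decide)
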